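/- For all integers d, k with 1 ≤ k ≤ d and all n ≥ 1, the number of closed (d,k)-self-avoiding manifolds of k-area n satisfies c^SAM_{(d,k),n}(0) ≤ C(d,k) · (2(d−k)+1)^{n−1}, where C(d,k) is the binomial coefficient d choose k. -/

import Mathlib

open Filter

/-- A `k`-face of the hypercubic lattice `ℤ^d`: an orientation set `S ⊆ {1,…,d}`
together with a base vertex `v ∈ ℤ^d`. -/
abbrev Face (d : ℕ) := Finset (Fin d) × (Fin d → ℤ)

/-- The boundary `(k-1)`-edges of a `k`-face `(S, v)`: the `(k-1)`-faces
`(S \ {i}, v)` and `(S \ {i}, v + e_i)` for `i ∈ S`. -/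
def faceEdges {d : ℕ} (f : Face d) : Finset (Face d) :=
  f.1.biUnion fun i =>
    {(f.1.erase i, f.2), (f.1.erase i, f.2 + Pi.single i 1)}

/-- Two faces are adjacent if they are distinct and share a common boundary edge. -/
def FaceAdj {d : ℕ} (f g : Face d) : Prop :=
  f ≠ g ∧ ∃ e, e ∈ faceEdges f ∧ e ∈ faceEdges g

/-- A set of faces is connected with respect to adjacency. -/
def ConnectedFaces {d : ℕ} (M : Finset (Face d)) : Prop :=
  ∀ f ∈ M, ∀ g ∈ M, Relation.ReflTransGen (fun a b => a ∈ M ∧ b ∈ M ∧ FaceAdj a b) f g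

/-- A `(d,k)`-self-avoiding manifold of `k`-area `n`: a connected set of `n` `k`-faces
such that every `(k-1)`-edge bounds at most two of its `k`-faces. -/
def IsSAM (d k n : ℕ) (M : Finset (Face d)) : Prop :=
  M.card = n ∧ (∀ f ∈ M, f.1.card = k) ∧ ConnectedFaces M ∧
    ∀ e : Face d, (M.filter fun f => e ∈ faceEdges f).card ≤ 2

/-- A closed `(d,k)`-self-avoiding manifold: every boundary edge of every face
is shared by exactly two faces. -/
def IsClosedSAM (d k n : ℕ) (M : Finset (Face d)) : Prop :=
  IsSAM d k n M ∧ ∀ f ∈ M, ∀ e ∈ faceEdges f,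
    (M.filter fun g => e ∈ faceEdges g).card = 2

/-- A `(d,k)`-fixed polyominoid of `k`-area `n`: a connected set of `n` `k`-faces. -/
def IsXD (d k n : ℕ) (M : Finset (Face d)) : Prop :=
  M.card = n ∧ (∀ f ∈ M, f.1.card = k) ∧ ConnectedFaces M

/-- Translation of a face by a lattice vector. -/
def translateFace {d : ℕ} (t : Fin d → ℤ) (f : Face d) : Face d := (f.1, f.2 + t)

/-- Two sets of faces are translation-equivalent. -/
def TransEquiv {d : ℕ} (A B : Finset (Face d)) : Prop :=
  ∃ t : Fin d → ℤ, A.image (translateFace t) = B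

/-- The number of `(d,k)`-self-avoiding manifolds of `k`-area `n`, up to translation. -/
noncomputable def samCount (d k n : ℕ) : ℕ :=
  Nat.card (Quot fun A B : {M : Finset (Face d) // IsSAM d k n M} =>
    TransEquiv A.val B.val)

/-- The number of closed `(d,k)`-self-avoiding manifolds of `k`-area `n`, up to
translation. -/
noncomputable def closedSamCount (d k n : ℕ) : ℕ :=
  Nat.card (Quot fun A B : {M : Finset (Face d) // IsClosedSAM d k n M} =>
    TransEquiv A.val B.val)

/-- The number of `(d,k)`-fixed polyominoids of `k`-area `n`, up to translation. -/
noncomputable def xdCount (d k n : ℕ) : ℕ :=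
  Nat.card (Quot fun A B : {M : Finset (Face d) // IsXD d k n M} =>
    TransEquiv A.val B.val)

/-!
Grow a closed manifold `M` face by face from a given face. A nonempty proper part `X` of `M`
is adjacent to some face of `M` outside `X`, and the edge `e` joining them bounds only one face `f`
of `X`, since it bounds at most two faces of `M`. Every closed manifold containing `X` must
contain a second face at `e`, which then lies outside `X`, and at most `2 * (d - k) + 1` faces other
than `f` have `e` as an edge. As `f` and `e` depend only on `X`, each of the `n - 1` steps after
the first face multiplies the number of possibilities by at most `2 * (d - k) + 1`. Up to
translation, the first face is based at the origin, so that only its orientation is to be chosen.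
-/

section Counting

theorem encard_supersets_le_pow {α : Type*} {𝓕 : Set (Finset α)} {n b : ℕ}
    (hcard : ∀ M ∈ 𝓕, M.card = n) (X₀ : Finset α)
    (hbranch : ∀ X, X₀ ⊆ X → ∀ M ∈ 𝓕, X ⊂ M →
      ∃ G : Finset α, G.card ≤ b ∧ ∀ N ∈ 𝓕, X ⊆ N → ∃ g ∈ G, g ∈ N ∧ g ∉ X) :
    {M ∈ 𝓕 | X₀ ⊆ M}.encard ≤ (b ^ (n - X₀.card) : ℕ) := by
  classical
  induction hm : n - X₀.card generalizing X₀ with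
  | zero =>
    have eq_of_superset : ∀ M ∈ 𝓕, X₀ ⊆ M → X₀ = M := fun M hM hXM =>
      Finset.eq_of_subset_of_card_le hXM (by rw [hcard M hM]; omega)
    rw [pow_zero, Nat.cast_one, Set.encard_le_one_iff]
    exact fun M N hM hN => (eq_of_superset M hM.1 hM.2).symm.trans (eq_of_superset N hN.1 hN.2)
  | succ m ih =>
    by_cases hne : ∃ M ∈ 𝓕, X₀ ⊆ M
    swap
    · have : {M ∈ 𝓕 | X₀ ⊆ M} = ∅ := by
        ext M
        simpa using fun hM hXM => hne ⟨M, hM, hXM⟩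
      simp [this]
    obtain ⟨M, hM, hXM⟩ := hne
    have hssub : X₀ ⊂ M := hXM.ssubset_of_ne (by rintro rfl; have := hcard _ hM; omega)
    obtain ⟨G, hGb, hG⟩ := hbranch X₀ subset_rfl M hM hssub
    have hstep : ∀ g ∈ G \ X₀, {M ∈ 𝓕 | insert g X₀ ⊆ M}.encard ≤ (b ^ m : ℕ) := fun g hg =>
      ih (insert g X₀)
        (fun X hX => hbranch X ((Finset.subset_insert g X₀).trans hX))
        (by rw [Finset.card_insert_of_notMem (Finset.mem_sdiff.1 hg).2]; omega)
    have hcover : {M ∈ 𝓕 | X₀ ⊆ M} ⊆ ⋃ g ∈ G \ X₀, {M ∈ 𝓕 | insert g X₀ ⊆ M} := by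
      rintro N ⟨hN, hXN⟩
      obtain ⟨g, hgG, hgN, hgX⟩ := hG N hN hXN
      exact Set.mem_biUnion (Finset.mem_sdiff.2 ⟨hgG, hgX⟩)
        ⟨hN, Finset.insert_subset hgN hXN⟩
    calc {M ∈ 𝓕 | X₀ ⊆ M}.encard
        ≤ ∑ g ∈ G \ X₀, {M ∈ 𝓕 | insert g X₀ ⊆ M}.encard :=
          (Set.encard_le_encard hcover).trans (Finset.set_encard_biUnion_le _ _)
      _ ≤ ((G \ X₀).card * b ^ m : ℕ) := by
          simpa using Finset.sum_le_card_nsmul _ _ _ hstep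
      _ ≤ (b ^ (m + 1) : ℕ) := by
          rw [pow_succ']
          gcongr
          exact (Finset.card_le_card Finset.sdiff_subset).trans hGb

theorem natCard_quot_subtype_le {α : Type*} {p : α → Prop} {r : Subtype p → Subtype p → Prop}
    {s : Set α} {m : ℕ} (hs : s.encard ≤ m) (hr : ∀ a, ∃ b, r a b ∧ b.1 ∈ s) :
    Nat.card (Quot r) ≤ m := by
  have : Finite s := Set.finite_of_encard_le_coe hs
  have exists_rep : ∀ q : Quot r, ∃ b : Subtype p, Quot.mk r b = q ∧ b.1 ∈ s := by
    rintro ⟨a⟩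
    obtain ⟨b, hab, hb⟩ := hr a
    exact ⟨b, (Quot.sound hab).symm, hb⟩
  choose rep mk_rep rep_mem using exists_rep
  have rep_injective : Function.Injective fun q => (⟨(rep q).1, rep_mem q⟩ : s) := by
    intro q q' h
    have hrep : rep q = rep q' := Subtype.ext (Subtype.mk.inj h)
    rw [← mk_rep q, hrep, mk_rep q']
  calc Nat.card (Quot r) ≤ Nat.card s := Nat.card_le_card_of_injective _ rep_injective
    _ ≤ m := ENat.toNat_le_of_le_natCast hs

theorem exists_rel_of_reflTransGen {α : Type*} {r : α → α → Prop} {p : α → Prop} {a b : α}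
    (h : Relation.ReflTransGen r a b) (ha : p a) (hb : ¬p b) :
    ∃ x y, r x y ∧ p x ∧ ¬p y := by
  induction h with
  | refl => exact absurd ha hb
  | @tail c b _ hcb ih =>
    by_cases hc : p c
    · exact ⟨c, b, hcb, hc, hb⟩
    · exact ih hc

end Counting

section Cofaces

variable {d : ℕ}

theorem mem_faceEdges {e f : Face d} :
    e ∈ faceEdges f ↔
      ∃ i ∈ f.1, e = (f.1.erase i, f.2) ∨ e = (f.1.erase i, f.2 + Pi.single i 1) := by
  simp only [faceEdges, Finset.mem_biUnion, Finset.mem_insert, Finset.mem_singleton]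

theorem card_orientation_of_mem_faceEdges {e f : Face d} (he : e ∈ faceEdges f) :
    e.1.card + 1 = f.1.card := by
  obtain ⟨i, hi, rfl | rfl⟩ := mem_faceEdges.1 he <;> exact Finset.card_erase_add_one hi

/-- The faces that have `e` as a boundary edge (see `mem_cofaces`). -/
def cofaces (e : Face d) : Finset (Face d) :=
  e.1ᶜ.biUnion fun i => {(insert i e.1, e.2), (insert i e.1, e.2 - Pi.single i 1)}

theorem mem_cofaces {e f : Face d} : f ∈ cofaces e ↔ e ∈ faceEdges f := by
  simp only [cofaces, mem_faceEdges, Finset.mem_biUnion, Finset.mem_insert,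
    Finset.mem_singleton, Finset.mem_compl]
  constructor
  · rintro ⟨i, hi, rfl | rfl⟩ <;> exact ⟨i, by simp [hi]⟩
  · rintro ⟨i, hi, rfl | rfl⟩ <;> exact ⟨i, by simp [hi]⟩

theorem card_cofaces_le (e : Face d) : (cofaces e).card ≤ 2 * (d - e.1.card) := by
  have := Finset.card_biUnion_le_card_mul e.1ᶜ
    (fun i => {(insert i e.1, e.2), (insert i e.1, e.2 - Pi.single i 1)}) 2
    fun _ _ => Finset.card_le_two
  rwa [Finset.card_compl, Fintype.card_fin, mul_comm] at this

theorem card_cofaces_erase_le {e f : Face d} (he : e ∈ faceEdges f) :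
    ((cofaces e).erase f).card ≤ 2 * (d - f.1.card) + 1 := by
  have hle := card_cofaces_le e
  have hcard := card_orientation_of_mem_faceEdges he
  rw [Finset.card_erase_of_mem (mem_cofaces.2 he)]
  omega

end Cofaces

section Growth

variable {d k n : ℕ} {M X : Finset (Face d)}

theorem ConnectedFaces.exists_faceAdj (hM : ConnectedFaces M) (hX : X.Nonempty) (hXM : X ⊂ M) :
    ∃ f ∈ X, ∃ g ∈ M, g ∉ X ∧ FaceAdj f g := by
  obtain ⟨a, ha⟩ := hX
  obtain ⟨b, hb, hbX⟩ := Finset.exists_of_ssubset hXM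
  obtain ⟨f, g, ⟨_, hg, hfg⟩, hf, hgX⟩ :=
    exists_rel_of_reflTransGen (p := (· ∈ X)) (hM a (hXM.1 ha) b hb) ha hbX
  exact ⟨f, hf, g, hg, hgX, hfg⟩

theorem IsSAM.exists_edge_unique_face (hM : IsSAM d k n M) (hX : X.Nonempty) (hXM : X ⊂ M) :
    ∃ f ∈ X, ∃ e ∈ faceEdges f, ∀ f' ∈ X, e ∈ faceEdges f' → f' = f := by
  obtain ⟨-, -, hconn, hdeg⟩ := hM
  obtain ⟨f, hf, g, hg, hgX, hfg, e, hef, heg⟩ := hconn.exists_faceAdj hX hXM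
  refine ⟨f, hf, e, hef, fun f' hf' hef' => ?_⟩
  by_contra hne
  have hthree : 2 < (M.filter fun h => e ∈ faceEdges h).card :=
    Finset.two_lt_card.2 ⟨f', by simp [hXM.1 hf', hef'], f, by simp [hXM.1 hf, hef],
      g, by simp [hg, heg], hne, ne_of_mem_of_not_mem hf' hgX, hfg⟩
  exact (hdeg e).not_gt hthree

theorem IsClosedSAM.exists_ne_of_mem_faceEdges (hM : IsClosedSAM d k n M) {e f : Face d}
    (hf : f ∈ M) (he : e ∈ faceEdges f) : ∃ g ∈ M, e ∈ faceEdges g ∧ g ≠ f := by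
  have hone : 1 < (M.filter fun g => e ∈ faceEdges g).card := by
    rw [hM.2 f hf e he]
    exact one_lt_two
  obtain ⟨g, hg, hgf⟩ := Finset.exists_mem_ne hone f
  exact ⟨g, (Finset.mem_filter.1 hg).1, (Finset.mem_filter.1 hg).2, hgf⟩

theorem IsClosedSAM.exists_extension_candidates (hM : IsClosedSAM d k n M) (hX : X.Nonempty)
    (hXM : X ⊂ M) :
    ∃ G : Finset (Face d), G.card ≤ 2 * (d - k) + 1 ∧
      ∀ N, IsClosedSAM d k n N → X ⊆ N → ∃ g ∈ G, g ∈ N ∧ g ∉ X := by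
  obtain ⟨f, hf, e, he, hunique⟩ := hM.1.exists_edge_unique_face hX hXM
  refine ⟨(cofaces e).erase f, ?_, fun N hN hXN => ?_⟩
  · rw [← hM.1.2.1 f (hXM.1 hf)]
    exact card_cofaces_erase_le he
  · obtain ⟨g, hg, heg, hgf⟩ := hN.exists_ne_of_mem_faceEdges (hXN hf) he
    exact ⟨g, Finset.mem_erase.2 ⟨hgf, mem_cofaces.2 heg⟩, hg,
      fun hgX => hgf (hunique g hgX heg)⟩

theorem encard_setOf_isClosedSAM_mem_le (f : Face d) :
    {M | IsClosedSAM d k n M ∧ f ∈ M}.encard ≤ ((2 * (d - k) + 1) ^ (n - 1) : ℕ) := by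
  have h := encard_supersets_le_pow (𝓕 := {M | IsClosedSAM d k n M}) (fun M hM => hM.1.1) {f}
    fun X hfX M hM hXM =>
      hM.exists_extension_candidates ((Finset.singleton_nonempty f).mono hfX) hXM
  simpa only [Set.mem_ofPred_eq, Finset.singleton_subset_iff, Finset.card_singleton] using h

end Growth

section Translation

variable {d k n : ℕ} {M : Finset (Face d)} (t : Fin d → ℤ)

theorem translateFace_injective : Function.Injective (translateFace t) := by
  rintro ⟨S, v⟩ ⟨S', v'⟩ h
  simpa [translateFace] using h

theorem translateFace_surjective : Function.Surjective (translateFace t) := fun f =>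
  ⟨(f.1, f.2 - t), by simp [translateFace]⟩

theorem translateFace_mem_faceEdges {e f : Face d} :
    translateFace t e ∈ faceEdges (translateFace t f) ↔ e ∈ faceEdges f := by
  obtain ⟨S, v⟩ := f
  obtain ⟨T, w⟩ := e
  simp [translateFace, mem_faceEdges, add_right_comm v t]

theorem FaceAdj.translate {f g : Face d} (h : FaceAdj f g) :
    FaceAdj (translateFace t f) (translateFace t g) := by
  obtain ⟨hne, e, hef, heg⟩ := h
  exact ⟨(translateFace_injective t).ne hne, translateFace t e,
    (translateFace_mem_faceEdges t).2 hef, (translateFace_mem_faceEdges t).2 heg⟩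

theorem ConnectedFaces.translate (hM : ConnectedFaces M) :
    ConnectedFaces (M.image (translateFace t)) := by
  simp only [ConnectedFaces, Finset.forall_mem_image]
  intro f hf g hg
  refine Relation.ReflTransGen.lift (translateFace t) ?_ _ _ (hM f hf g hg)
  rintro a b ⟨ha, hb, hab⟩
  exact ⟨Finset.mem_image_of_mem _ ha, Finset.mem_image_of_mem _ hb, hab.translate t⟩

theorem card_filter_mem_faceEdges_translate (e : Face d) :
    ((M.image (translateFace t)).filter fun g => translateFace t e ∈ faceEdges g).card =
      (M.filter fun g => e ∈ faceEdges g).card := by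
  rw [Finset.filter_image, Finset.card_image_of_injective _ (translateFace_injective t)]
  simp only [translateFace_mem_faceEdges]

theorem IsSAM.translate (hM : IsSAM d k n M) :
    IsSAM d k n (M.image (translateFace t)) := by
  obtain ⟨hcard, hdim, hconn, hdeg⟩ := hM
  refine ⟨?_, Finset.forall_mem_image.2 hdim, hconn.translate t, ?_⟩
  · rw [Finset.card_image_of_injective _ (translateFace_injective t), hcard]
  · rw [(translateFace_surjective t).forall]
    simpa only [card_filter_mem_faceEdges_translate] using hdeg

theorem IsClosedSAM.translate (hM : IsClosedSAM d k n M) :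
    IsClosedSAM d k n (M.image (translateFace t)) := by
  refine ⟨hM.1.translate t, Finset.forall_mem_image.2 fun f hf => ?_⟩
  rw [(translateFace_surjective t).forall]
  intro e he
  rw [card_filter_mem_faceEdges_translate]
  exact hM.2 f hf e ((translateFace_mem_faceEdges t).1 he)

theorem IsClosedSAM.exists_transEquiv_mem_origin (hM : IsClosedSAM d k n M) (hne : M.Nonempty) :
    ∃ N, IsClosedSAM d k n N ∧ TransEquiv M N ∧
      ∃ S ∈ Finset.powersetCard k (Finset.univ : Finset (Fin d)), (S, 0) ∈ N := by
  obtain ⟨f, hf⟩ := hne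
  refine ⟨_, hM.translate (-f.2), ⟨-f.2, rfl⟩, f.1, ?_, ?_⟩
  · exact Finset.mem_powersetCard_univ.2 (hM.1.2.1 f hf)
  · exact Finset.mem_image.2 ⟨f, hf, by simp [translateFace]⟩

end Translation

theorem closedSamCount_upper_bound (d k : ℕ) (hk : 1 ≤ k) (hkd : k ≤ d)
    (n : ℕ) (hn : 1 ≤ n) :
    closedSamCount d k n ≤ d.choose k * (2 * (d - k) + 1) ^ (n - 1) := by
  have hanchored : (⋃ S ∈ Finset.powersetCard k (Finset.univ : Finset (Fin d)),
      {M | IsClosedSAM d k n M ∧ (S, 0) ∈ M}).encard ≤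
        (d.choose k * (2 * (d - k) + 1) ^ (n - 1) : ℕ) := by
    refine (Finset.set_encard_biUnion_le _ _).trans ?_
    simpa using Finset.sum_le_card_nsmul (Finset.powersetCard k Finset.univ) _ _
      fun S _ => encard_setOf_isClosedSAM_mem_le (n := n) (k := k) (S, (0 : Fin d → ℤ))
  refine natCard_quot_subtype_le hanchored ?_
  rintro ⟨M, hM⟩
  have hne : M.Nonempty := Finset.card_pos.1 (by rw [hM.1.1]; exact hn)
  obtain ⟨N, hN, hMN, S, hS, hSN⟩ := hM.exists_transEquiv_mem_origin hne
  exact ⟨⟨N, hN⟩, hMN, Set.mem_biUnion hS ⟨hN, hSN⟩⟩
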